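/- arXiv:2306.00967 — 5 statements merged into one kernel-verified Lean document; each statement's English description precedes it below -/
import Mathlib

section
/- Let u : ℝ → ℝ be twice continuously differentiable with u″(x) > 0 for every x ∈ ℝ. Let ν be a compactly supported probability measure on ℝ satisfying the Schwinger–Dyson equation for the potential u, and let μ = (u′)_♯ν be the pushforward of ν by u′. Assume μ is absolutely continuous with respect to Lebesgue measure and compactly supported. Then the function A(x,y) = (x−y)/((u′)⁻¹(x) − (u′)⁻¹(y)) for x ≠ y (extended on the diagonal by 1/(u″((u′)⁻¹(x))) ... the diagonal is μ⊗μ-negligible) is a free Stein kernel for μ relative to the standard semicircular potential; that is, for every continuously differentiable g : ℝ → ℝ one has ∫ x·g(x) dμ(x) = ∫∫ A(x,y)·((g(x)−g(y))/(x−y)) dμ(x) dμ(y). -/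
open MeasureTheory

/-- Divided quotient of a function `f`: `(f x − f y)/(x − y)` off the diagonal, extended by
`f′(x)` on the diagonal. -/
noncomputable def dq (f : ℝ → ℝ) (x y : ℝ) : ℝ :=
  if x = y then deriv f x else (f x - f y) / (x - y)

/-- The moment-map free Stein kernel: if `ν` is a compactly supported probability measure
satisfying the Schwinger–Dyson equation for a `C²` potential `u` with `u″ > 0`, and
`μ = (u′)_♯ν` is absolutely continuous and compactly supported, then
`A(x,y) = (x−y)/((u′)⁻¹(x) − (u′)⁻¹(y))` (extended on the negligible diagonal by
`1/u″((u′)⁻¹(x))`) is a free Stein kernel for `μ` relative to the standard semicircular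
potential: `∫ x·g(x) dμ = ∫∫ A(x,y)·dq g(x,y) dμ dμ` for every `C¹` function `g`. -/
theorem moment_map_free_stein_kernel (u : ℝ → ℝ) (hu : ContDiff ℝ 2 u)
    (hu'' : ∀ x, 0 < deriv (deriv u) x)
    (ν : Measure ℝ) [IsProbabilityMeasure ν]
    (hνc : ∃ K : Set ℝ, IsCompact K ∧ ν Kᶜ = 0)
    (hSD : ∀ f : ℝ → ℝ, ContDiff ℝ 1 f →
      ∫ x, deriv u x * f x ∂ν = ∫ x, ∫ y, dq f x y ∂ν ∂ν)
    (μ : Measure ℝ) (hμ : μ = ν.map (deriv u))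
    (hac : μ ≪ volume) (hμc : ∃ K : Set ℝ, IsCompact K ∧ μ Kᶜ = 0) :
    ∀ g : ℝ → ℝ, ContDiff ℝ 1 g →
      ∫ x, x * g x ∂μ =
        ∫ x, ∫ y,
          (if x = y then 1 / deriv (deriv u) (Function.invFun (deriv u) x)
            else (x - y) / (Function.invFun (deriv u) x - Function.invFun (deriv u) y)) *
          dq g x y ∂μ ∂μ := by
  intro g hg
  have hT : ContDiff ℝ 1 (deriv u) := by
    have h2 : ContDiff ℝ (1 + 1) u := by
      have : (1 + 1 : WithTop ℕ∞) = 2 := by norm_num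
      rw [this]; exact hu
    exact (contDiff_succ_iff_deriv.1 h2).2.2
  have hmono : StrictMono (deriv u) := strictMono_of_deriv_pos hu''
  have hinj := hmono.injective
  have hemb : MeasurableEmbedding (deriv u) := hT.continuous.measurableEmbedding hinj
  have hinv : ∀ x, Function.invFun (deriv u) (deriv u x) = x :=
    Function.leftInverse_invFun hinj
  have hatom : ∀ x, ν {x} = 0 := by
    intro x
    have h1 : μ {deriv u x} = 0 := hac (by simp)
    rw [hμ, hemb.map_apply] at h1
    refine measure_mono_null ?_ h1
    intro y hy
    simp only [Set.mem_singleton_iff] at hy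
    simp [hy]
  subst hμ
  rw [hemb.integral_map, hemb.integral_map]
  have h := hSD (fun x => g (deriv u x)) (hg.comp hT)
  rw [h]
  refine integral_congr_ae (Filter.Eventually.of_forall fun x => ?_)
  simp only
  rw [hemb.integral_map]
  refine integral_congr_ae ?_
  have hne : ∀ᵐ y ∂ν, y ≠ x := by
    rw [ae_iff]
    simpa using hatom x
  filter_upwards [hne] with y hy
  have h1 : x ≠ y := fun h => hy h.symm
  have h2 : deriv u x ≠ deriv u y := fun h => h1 (hinj h)
  have h3 := sub_ne_zero.2 h1
  have h4 := sub_ne_zero.2 h2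
  simp only [dq, if_neg h1, if_neg h2, hinv]
  field_simp
end

section
/- Let u : ℝ → ℝ be twice continuously differentiable with u″(x) > 0 for every x ∈ ℝ. Let ν be a compactly supported probability measure on ℝ satisfying the Schwinger–Dyson equation for the potential u, and let μ = (u′)_♯ν be the pushforward of ν by u′, assumed absolutely continuous with respect to Lebesgue measure and compactly supported. Then ∫∫ ((x−y)/((u′)⁻¹(x) − (u′)⁻¹(y)) − 1)² dμ(x) dμ(y) ≤ ∫∫ ((u′(x)−u′(y))/(x−y) − 1)² dν(x) dν(y); i.e., the squared deviation of the moment-map Stein kernel of μ from the constant 1 is bounded by the mean-square deviation of the difference quotient of u′ from 1 under ν⊗ν. -/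
open MeasureTheory

/-- If `ν` is a compactly supported probability measure satisfying the Schwinger–Dyson equation
for a `C²` potential `u` with `u″ > 0`, and `μ = (u′)_♯ν` is absolutely continuous and compactly
supported, then the squared deviation of the moment-map Stein kernel of `μ` from `1` is bounded
by the mean-square deviation of the difference quotient of `u′` from `1` under `ν⊗ν`:
`∫∫ ((x−y)/((u′)⁻¹(x)−(u′)⁻¹(y)) − 1)² dμ dμ ≤ ∫∫ ((u′(x)−u′(y))/(x−y) − 1)² dν dν`. -/
theorem moment_map_stein_discrepancy_bound (u : ℝ → ℝ) (hu : ContDiff ℝ 2 u)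
    (hu'' : ∀ x, 0 < deriv (deriv u) x)
    (ν : Measure ℝ) [IsProbabilityMeasure ν]
    (hνc : ∃ K : Set ℝ, IsCompact K ∧ ν Kᶜ = 0)
    (hSD : ∀ f : ℝ → ℝ, ContDiff ℝ 1 f →
      ∫ x, deriv u x * f x ∂ν = ∫ x, ∫ y, dq f x y ∂ν ∂ν)
    (μ : Measure ℝ) (hμ : μ = ν.map (deriv u))
    (hac : μ ≪ volume) (hμc : ∃ K : Set ℝ, IsCompact K ∧ μ Kᶜ = 0) :
    ∫ x, ∫ y,
        ((if x = y then 1 / deriv (deriv u) (Function.invFun (deriv u) x)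
          else (x - y) / (Function.invFun (deriv u) x - Function.invFun (deriv u) y)) - 1) ^ 2
        ∂μ ∂μ ≤
      ∫ x, ∫ y, (dq (deriv u) x y - 1) ^ 2 ∂ν ∂ν := by
  have hc : Continuous (deriv u) := hu.continuous_deriv (by norm_num)
  have hmono : StrictMono (deriv u) := strictMono_of_deriv_pos hu''
  have hinj : Function.Injective (deriv u) := hmono.injective
  have hemb : MeasurableEmbedding (deriv u) := hc.measurableEmbedding hinj
  have hinv : ∀ s, Function.invFun (deriv u) (deriv u s) = s :=
    Function.leftInverse_invFun hinj
  have hatom : ∀ s, ν {s} = 0 := by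
    intro s
    have h0 : μ {deriv u s} = 0 := hac (by simp)
    rw [hμ, hemb.map_apply] at h0
    exact measure_mono_null (by intro t ht; simp_all) h0
  rw [hμ, hemb.integral_map]
  refine le_of_eq (integral_congr_ae (Filter.Eventually.of_forall fun s => ?_))
  simp only
  rw [hemb.integral_map]
  have hne : ∀ᵐ t ∂ν, t ≠ s := by
    rw [ae_iff]
    simpa using hatom s
  refine integral_congr_ae ?_
  filter_upwards [hne] with t ht
  have h1 : deriv u s ≠ deriv u t := fun h => ht (hinj h).symm
  simp only [hinv, if_neg h1, dq, if_neg (Ne.symm ht)]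
end

section
/- Let μ be a compactly supported probability measure on ℝ. Then μ is the standard semicircle law S(0,1) if and only if for every integer n ≥ 1 and every real polynomial p one has ∫ U_n(x)·p(x) dμ(x) = ∫∫ U_{n−1}(x)·(p(x)−p(y))/(x−y) dμ(x) dμ(y), where (p(x)−p(y))/(x−y) denotes the first divided difference of p, which is a polynomial function on ℝ². -/
open MeasureTheory

/-- The semicircular distribution of variance `v`: the measure on `ℝ` with density
`x ↦ √(4v − x²) / (2πv)`.  `semicircle 1` is the standard semicircle law `S(0,1)`. -/
noncomputable def semicircle (v : ℝ) : Measure ℝ :=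
  volume.withDensity fun x => ENNReal.ofReal (Real.sqrt (4 * v - x ^ 2) / (2 * Real.pi * v))

/-- The free Chebyshev polynomials (second kind, rescaled to `[−2,2]`). -/
noncomputable def chebU : ℕ → ℝ → ℝ
  | 0, _ => 1
  | 1, x => x
  | (n + 2), x => x * chebU (n + 1) x - chebU n x

/-- `Δᵏ[x^m](x₀,…,x_k) = Σ_{a₀+⋯+a_k = m−k} x₀^{a₀}⋯x_k^{a_k}` (zero when `m < k`). -/
noncomputable def divDiffMonomial (k m : ℕ) (x : Fin (k + 1) → ℝ) : ℝ :=
  if k ≤ m then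
    ∑ a ∈ Finset.Nat.antidiagonalTuple (k + 1) (m - k), ∏ i, x i ^ a i
  else 0

/-- The `k`-th divided difference `Δᵏp` of a real polynomial `p`, extended to a polynomial
function on `ℝ^{k+1}`. -/
noncomputable def divDiff (k : ℕ) (p : Polynomial ℝ) (x : Fin (k + 1) → ℝ) : ℝ :=
  ∑ m ∈ Finset.range (p.natDegree + 1), p.coeff m * divDiffMonomial k m x

namespace SemiStein

open Polynomial

/-- Free Chebyshev polynomials as polynomials. -/
noncomputable def chP : ℕ → ℝ[X]
  | 0 => 1
  | 1 => X
  | (n + 2) => X * chP (n + 1) - chP n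

theorem chP_eval (n : ℕ) (x : ℝ) : (chP n).eval x = chebU n x := by
  induction n using Nat.twoStepInduction with
  | zero => simp [chP, chebU]
  | one => simp [chP, chebU]
  | more n h1 h2 => simp [chP, chebU, h1, h2]

theorem chebU_cont (n : ℕ) : Continuous (chebU n) := by
  have : chebU n = fun x => (chP n).eval x := funext fun x => (chP_eval n x).symm
  rw [this]
  exact (chP n).continuous

theorem chebU_cos (n : ℕ) (t : ℝ) :
    chebU n (2 * Real.cos t) * Real.sin t = Real.sin ((n + 1) * t) := by
  induction n using Nat.twoStepInduction with
  | zero => simp [chebU]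
  | one => simp only [chebU]; push_cast; rw [one_add_one_eq_two, Real.sin_two_mul]; ring
  | more n h1 h2 =>
    have e1 : ((n + 2 : ℕ) + 1 : ℝ) * t = ((n + 1 : ℕ) + 1 : ℝ) * t + t := by push_cast; ring
    have e2 : ((n : ℝ) + 1) * t = ((n + 1 : ℕ) + 1 : ℝ) * t - t := by push_cast; ring
    simp only [chebU]
    rw [e2, Real.sin_sub] at h1
    rw [e1, Real.sin_add]
    linear_combination 2 * Real.cos t * h2 - h1

/-- Induction along the Chebyshev basis. -/
theorem cheb_induction (Q : ℝ[X] → Prop) (h0 : ∀ n, Q (chP n))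
    (hadd : ∀ p q, Q p → Q q → Q (p + q)) (hsmul : ∀ (c : ℝ) p, Q p → Q (C c * p)) (p : ℝ[X]) :
    Q p := by
  have h1 : ∀ p : ℝ[X], p ∈ Submodule.span ℝ (Set.range chP) → Q p := by
    intro p hp
    induction hp using Submodule.span_induction with
    | mem x hx => obtain ⟨n, rfl⟩ := hx; exact h0 n
    | zero => simpa using hsmul 0 1 (h0 0)
    | add x y _ _ hx hy => exact hadd x y hx hy
    | smul c x _ hx => rw [smul_eq_C_mul]; exact hsmul c x hx
  have hX : ∀ p : ℝ[X], p ∈ Submodule.span ℝ (Set.range chP) →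
      X * p ∈ Submodule.span ℝ (Set.range chP) := by
    intro p hp
    induction hp using Submodule.span_induction with
    | mem x hx =>
      obtain ⟨n, rfl⟩ := hx
      cases n with
      | zero => exact Submodule.subset_span ⟨1, by simp [chP]⟩
      | succ n =>
        have : X * chP (n + 1) = chP (n + 2) + chP n := by simp [chP]
        rw [this]
        exact add_mem (Submodule.subset_span ⟨_, rfl⟩) (Submodule.subset_span ⟨_, rfl⟩)
    | zero => simp
    | add x y _ _ hx hy => rw [mul_add]; exact add_mem hx hy
    | smul c x _ hx => rw [mul_smul_comm]; exact Submodule.smul_mem _ _ hx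
  apply h1
  have hm : ∀ m : ℕ, (X : ℝ[X]) ^ m ∈ Submodule.span ℝ (Set.range chP) := by
    intro m
    induction m with
    | zero => exact Submodule.subset_span ⟨0, by simp [chP]⟩
    | succ m ih => rw [pow_succ']; exact hX _ ih
  rw [p.as_sum_range_C_mul_X_pow]
  refine Submodule.sum_mem _ fun i _ => ?_
  rw [← smul_eq_C_mul]
  exact Submodule.smul_mem _ _ (hm i)

theorem integrable_of_compact {μ : Measure ℝ} [IsFiniteMeasure μ]
    (h : ∃ K : Set ℝ, IsCompact K ∧ μ Kᶜ = 0) {f : ℝ → ℝ} (hf : Continuous f) :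
    Integrable f μ := by
  obtain ⟨K, hK, h0⟩ := h
  have : μ.restrict K = μ := Measure.restrict_eq_self_of_ae_mem (by
    rw [ae_iff]; exact h0)
  rw [← this]
  exact hf.continuousOn.integrableOn_compact hK

/-! ### Divided differences -/

theorem mono_zero (x y : ℝ) : divDiffMonomial 1 0 ![x, y] = 0 := by
  simp [divDiffMonomial]

theorem mono_succ (m : ℕ) (x y : ℝ) :
    divDiffMonomial 1 (m + 1) ![x, y] = ∑ a ∈ Finset.HasAntidiagonal.antidiagonal m, x ^ a.1 * y ^ a.2 := by
  simp [divDiffMonomial, Finset.Nat.antidiagonalTuple_two]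

theorem mono_step (m : ℕ) (x y : ℝ) :
    divDiffMonomial 1 (m + 1) ![x, y] = x * divDiffMonomial 1 m ![x, y] + y ^ m := by
  cases m with
  | zero => rw [mono_succ, mono_zero]; simp
  | succ m =>
    rw [mono_succ, mono_succ, Finset.Nat.sum_antidiagonal_succ, Finset.mul_sum, add_comm]
    simp only [pow_zero, one_mul]
    congr 1
    exact Finset.sum_congr rfl fun a _ => by ring

theorem dd_sum (p : ℝ[X]) (x y : ℝ) :
    divDiff 1 p ![x, y] = p.sum fun m c => c * divDiffMonomial 1 m ![x, y] := by
  rw [Polynomial.sum_over_range _ (by simp)]; rfl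

theorem dd_add (p q : ℝ[X]) (x y : ℝ) :
    divDiff 1 (p + q) ![x, y] = divDiff 1 p ![x, y] + divDiff 1 q ![x, y] := by
  simp only [dd_sum]
  exact Polynomial.sum_add_index _ _ _ (by simp) (by intros; ring)

theorem dd_smul (c : ℝ) (q : ℝ[X]) (x y : ℝ) :
    divDiff 1 (C c * q) ![x, y] = c * divDiff 1 q ![x, y] := by
  simp only [dd_sum]
  rw [← smul_eq_C_mul, Polynomial.sum_smul_index _ _ _ (by simp), Polynomial.sum_def,
    Polynomial.sum_def, Finset.mul_sum]
  exact Finset.sum_congr rfl fun i _ => by ring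

theorem dd_monomial (m : ℕ) (c x y : ℝ) :
    divDiff 1 (monomial m c) ![x, y] = c * divDiffMonomial 1 m ![x, y] := by
  rw [dd_sum, Polynomial.sum_monomial_index _ _ (by simp)]

theorem dd_X_mul (p : ℝ[X]) (x y : ℝ) :
    divDiff 1 (X * p) ![x, y] = x * divDiff 1 p ![x, y] + p.eval y := by
  induction p using Polynomial.induction_on' with
  | add p q hp hq => rw [mul_add, dd_add, dd_add, hp, hq, eval_add]; ring
  | monomial n a =>
    rw [X_mul_monomial, dd_monomial, dd_monomial, mono_step, eval_monomial]; ring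

theorem dd_sub (p q : ℝ[X]) (x y : ℝ) :
    divDiff 1 (p - q) ![x, y] = divDiff 1 p ![x, y] - divDiff 1 q ![x, y] := by
  have : p - q = p + C (-1) * q := by simp [sub_eq_add_neg]
  rw [this, dd_add, dd_smul]; ring

theorem dd_one (x y : ℝ) : divDiff 1 1 ![x, y] = 0 := by
  have := dd_monomial 0 1 x y
  rwa [mono_zero, mul_zero, monomial_zero_one] at this

theorem dd_X (x y : ℝ) : divDiff 1 X ![x, y] = 1 := by
  have := dd_X_mul 1 x y
  simpa [dd_one] using this

theorem dd_cont (p : ℝ[X]) (x : ℝ) : Continuous fun y => divDiff 1 p ![x, y] := by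
  induction p using Polynomial.induction_on' with
  | add p q hp hq => simp only [dd_add]; exact hp.add hq
  | monomial n a =>
    simp only [dd_monomial]
    cases n with
    | zero => simp only [mono_zero]; fun_prop
    | succ n => simp only [mono_succ]; fun_prop

/-! ### The semicircle law -/

theorem dens_cont : Continuous fun x : ℝ => Real.sqrt (4 * 1 - x ^ 2) / (2 * Real.pi * 1) := by
  fun_prop

theorem dens_zero (x : ℝ) (hx : x ∉ Set.Icc (-2 : ℝ) 2) : Real.sqrt (4 * 1 - x ^ 2) = 0 := by
  apply Real.sqrt_eq_zero_of_nonpos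
  by_contra! h
  exact hx ⟨by nlinarith, by nlinarith⟩

instance semi_finite : IsFiniteMeasure (semicircle 1) := by
  unfold semicircle
  refine isFiniteMeasure_withDensity_ofReal (Integrable.hasFiniteIntegral ?_)
  refine dens_cont.integrable_of_hasCompactSupport
    (HasCompactSupport.intro (isCompact_Icc (a := (-2 : ℝ)) (b := 2)) fun x hx => ?_)
  rw [dens_zero x hx, zero_div]

theorem semi_supp : semicircle 1 (Set.Icc (-2 : ℝ) 2)ᶜ = 0 := by
  unfold semicircle
  rw [withDensity_apply _ measurableSet_Icc.compl]
  rw [setLIntegral_congr_fun (g := fun _ => 0) measurableSet_Icc.compl]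
  · simp
  · intro x hx
    simp only [dens_zero x hx, zero_div, ENNReal.ofReal_zero]

theorem semi_integral (f : ℝ → ℝ) (hf : Continuous f) :
    ∫ x, f x ∂(semicircle 1) =
      ∫ t in (0 : ℝ)..Real.pi, (2 / Real.pi) * (f (2 * Real.cos t) * Real.sin t ^ 2) := by
  have h1 : ∫ x, f x ∂(semicircle 1) =
      ∫ x, Real.sqrt (4 * 1 - x ^ 2) / (2 * Real.pi * 1) * f x := by
    unfold semicircle
    rw [integral_withDensity_eq_integral_toReal_smul (by fun_prop) (by simp)]
    refine integral_congr_ae (Filter.Eventually.of_forall fun x => ?_)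
    simp only [smul_eq_mul]
    rw [ENNReal.toReal_ofReal (by positivity)]
  have h2 : ∫ x, Real.sqrt (4 * 1 - x ^ 2) / (2 * Real.pi * 1) * f x =
      ∫ x in (-2 : ℝ)..2, Real.sqrt (4 * 1 - x ^ 2) / (2 * Real.pi * 1) * f x := by
    rw [intervalIntegral.integral_of_le (by norm_num), ← integral_Icc_eq_integral_Ioc]
    symm
    apply setIntegral_eq_integral_of_forall_compl_eq_zero
    intro x hx
    rw [dens_zero x hx]; simp
  have h3 := intervalIntegral.integral_comp_mul_deriv (a := 0) (b := Real.pi)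
    (f := fun t => 2 * Real.cos t) (f' := fun t => 2 * (- Real.sin t))
    (g := fun x => Real.sqrt (4 * 1 - x ^ 2) / (2 * Real.pi * 1) * f x)
    (fun x _ => (Real.hasDerivAt_cos x).const_mul 2) (by fun_prop) (by fun_prop)
  simp only [Real.cos_zero, Real.cos_pi, mul_one, mul_neg] at h3
  rw [h1, h2, intervalIntegral.integral_symm]
  simp only [mul_one]
  rw [← h3, ← intervalIntegral.integral_neg]
  apply intervalIntegral.integral_congr
  intro t ht
  rw [Set.uIcc_of_le Real.pi_pos.le] at ht
  have hs : 0 ≤ Real.sin t := Real.sin_nonneg_of_mem_Icc ht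
  have : Real.sqrt (4 - (2 * Real.cos t) ^ 2) = 2 * Real.sin t := by
    rw [show 4 - (2 * Real.cos t) ^ 2 = (2 * Real.sin t) ^ 2 by
      nlinarith [Real.sin_sq_add_cos_sq t]]
    exact Real.sqrt_sq (by positivity)
  simp only [Function.comp, this]
  field_simp

theorem int_cos (k : ℤ) : ∫ t in (0 : ℝ)..Real.pi, Real.cos (k * t) = if k = 0 then Real.pi else 0 := by
  split_ifs with h
  · simp [h]
  · have hk : (k : ℝ) ≠ 0 := by exact_mod_cast h
    rw [intervalIntegral.integral_comp_mul_left _ hk]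
    simp [Real.sin_int_mul_pi]

theorem semi_orth (n m : ℕ) :
    ∫ x, chebU n x * chebU m x ∂(semicircle 1) = if n = m then 1 else 0 := by
  rw [semi_integral (fun x => chebU n x * chebU m x) ((chebU_cont n).mul (chebU_cont m))]
  have : ∀ t : ℝ, (2 / Real.pi) *
      (chebU n (2 * Real.cos t) * chebU m (2 * Real.cos t) * Real.sin t ^ 2) =
      (1 / Real.pi) * (Real.cos (((n - m : ℤ) : ℝ) * t) - Real.cos (((n + m + 2 : ℤ) : ℝ) * t)) := by
    intro t
    have e1 : ((n - m : ℤ) : ℝ) * t = (n + 1) * t - (m + 1) * t := by push_cast; ring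
    have e2 : ((n + m + 2 : ℤ) : ℝ) * t = (n + 1) * t + (m + 1) * t := by push_cast; ring
    rw [e1, e2, Real.cos_sub, Real.cos_add, ← chebU_cos, ← chebU_cos]
    ring
  simp only [this]
  rw [intervalIntegral.integral_const_mul, intervalIntegral.integral_sub
    (Continuous.intervalIntegrable (by fun_prop) _ _)
    (Continuous.intervalIntegrable (by fun_prop) _ _), int_cos, int_cos]
  rw [if_neg (show ¬ (n + m + 2 : ℤ) = 0 by omega)]
  by_cases h : n = m
  · simp [h, Real.pi_ne_zero]
  · rw [if_neg h, if_neg (by omega)]; simp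

theorem semi_cheb (n : ℕ) : ∫ x, chebU n x ∂(semicircle 1) = if n = 0 then 1 else 0 := by
  have := semi_orth n 0
  simpa [chebU] using this

/-! ### Forward direction -/

/-- The Stein property with explicit inner integral. -/
def Good (p : ℝ[X]) : Prop :=
  ∃ q : ℝ[X], (∀ x, ∫ y, divDiff 1 p ![x, y] ∂(semicircle 1) = q.eval x) ∧
    ∀ n, ∫ x, chebU (n + 1) x * p.eval x ∂(semicircle 1) =
      ∫ x, chebU n x * q.eval x ∂(semicircle 1)

theorem semi_int {f : ℝ → ℝ} (hf : Continuous f) : Integrable f (semicircle 1) :=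
  integrable_of_compact ⟨_, isCompact_Icc, semi_supp⟩ hf

theorem inner_cheb (m : ℕ) (x : ℝ) :
    ∫ y, divDiff 1 (chP (m + 1)) ![x, y] ∂(semicircle 1) = chebU m x := by
  have base : ∫ y : ℝ, (1 : ℝ) ∂(semicircle 1) = 1 := by simpa [chebU] using semi_cheb 0
  have step : ∀ n, ∫ y, divDiff 1 (chP (n + 2)) ![x, y] ∂(semicircle 1) =
      x * ∫ y, divDiff 1 (chP (n + 1)) ![x, y] ∂(semicircle 1)
        - ∫ y, divDiff 1 (chP n) ![x, y] ∂(semicircle 1) := by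
    intro n
    simp only [chP, dd_sub, dd_X_mul]
    have i1 : Integrable (fun y => x * divDiff 1 (chP (n + 1)) ![x, y]) (semicircle 1) :=
      semi_int ((dd_cont _ _).const_mul x)
    have i2 : Integrable (fun y => (chP (n + 1)).eval y) (semicircle 1) :=
      semi_int (chP (n + 1)).continuous
    have i3 : Integrable (fun y => x * divDiff 1 (chP (n + 1)) ![x, y]
        + (chP (n + 1)).eval y) (semicircle 1) := i1.add i2
    rw [integral_sub i3 (semi_int (dd_cont _ _)), integral_add i1 i2,
      integral_const_mul]
    simp only [chP_eval, semi_cheb]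
    simp
  induction m using Nat.twoStepInduction with
  | zero => simp only [chP, dd_X, chebU]; exact base
  | one => rw [step 0]; simp only [chP, dd_X, dd_one, base, chebU]; simp
  | more m h1 h2 => rw [step, h1, h2]; simp [chebU]

theorem good_all (p : ℝ[X]) : Good p := by
  refine cheb_induction Good ?_ ?_ ?_ p
  · intro m
    cases m with
    | zero =>
      refine ⟨0, fun x => by simp [chP, dd_one], fun n => ?_⟩
      simp [chP, semi_cheb]
    | succ m =>
      refine ⟨chP m, fun x => by rw [inner_cheb, chP_eval], fun n => ?_⟩
      simp only [chP_eval, semi_orth, Nat.add_right_cancel_iff]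
  · rintro p q ⟨p', hp1, hp2⟩ ⟨q', hq1, hq2⟩
    refine ⟨p' + q', fun x => ?_, fun n => ?_⟩
    · simp only [dd_add]
      rw [integral_add (semi_int (dd_cont _ _)) (semi_int (dd_cont _ _)), hp1, hq1, eval_add]
    · simp only [eval_add, mul_add]
      have hi : ∀ (k : ℕ) (r : ℝ[X]), Integrable (fun x => chebU k x * r.eval x) (semicircle 1) :=
        fun k r => semi_int ((chebU_cont k).mul r.continuous)
      rw [integral_add (hi _ _) (hi _ _), integral_add (hi _ _) (hi _ _), hp2, hq2]
  · rintro c p ⟨p', hp1, hp2⟩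
    refine ⟨C c * p', fun x => ?_, fun n => ?_⟩
    · simp only [dd_smul]
      rw [integral_const_mul, hp1]; simp
    · simp only [eval_mul, eval_C, mul_left_comm _ c]
      rw [integral_const_mul, integral_const_mul, hp2]

/-! ### Moment determinacy -/

theorem ext_of_poly {μ ν : Measure ℝ} [IsFiniteMeasure μ] [IsFiniteMeasure ν]
    (hμ : ∃ K : Set ℝ, IsCompact K ∧ μ Kᶜ = 0) (hν : ∃ K : Set ℝ, IsCompact K ∧ ν Kᶜ = 0)
    (h : ∀ p : ℝ[X], ∫ x, p.eval x ∂μ = ∫ x, p.eval x ∂ν) : μ = ν := by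
  obtain ⟨R, hR1, hR2⟩ : ∃ R : ℝ, (∀ᵐ x ∂μ, x ∈ Set.Icc (-R) R) ∧
      ∀ᵐ x ∂ν, x ∈ Set.Icc (-R) R := by
    obtain ⟨K, hK, hK0⟩ := hμ
    obtain ⟨L, hL, hL0⟩ := hν
    obtain ⟨R, hR⟩ := (hK.union hL).isBounded.subset_closedBall 0
    rw [Real.closedBall_eq_Icc, zero_sub, zero_add] at hR
    refine ⟨R, ?_, ?_⟩
    · filter_upwards [show ∀ᵐ x ∂μ, x ∈ K from hK0] with x hx using hR (Or.inl hx)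
    · filter_upwards [show ∀ᵐ x ∂ν, x ∈ L from hL0] with x hx using hR (Or.inr hx)
  apply ext_of_forall_integral_eq_of_IsFiniteMeasure
  intro f
  have key : ∀ (ρ : Measure ℝ) [IsFiniteMeasure ρ] (_ : ∃ K : Set ℝ, IsCompact K ∧ ρ Kᶜ = 0)
      (_ : ∀ᵐ x ∂ρ, x ∈ Set.Icc (-R) R) (ε : ℝ) (p : ℝ[X])
      (_ : ∀ x ∈ Set.Icc (-R) R, |p.eval x - f x| < ε),
      |∫ x, p.eval x ∂ρ - ∫ x, f x ∂ρ| ≤ ε * ρ.real Set.univ := by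
    intro ρ _ hc hρ ε p hp
    rw [← integral_sub (integrable_of_compact hc p.continuous)
      (integrable_of_compact hc f.continuous), ← Real.norm_eq_abs]
    apply norm_integral_le_of_norm_le_const
    filter_upwards [hρ] with x hx
    exact (hp x hx).le
  have main : ∀ ε > 0, |∫ x, f x ∂μ - ∫ x, f x ∂ν| ≤
      ε * (μ.real Set.univ + ν.real Set.univ) := by
    intro ε hε
    obtain ⟨p, hp⟩ := exists_polynomial_near_of_continuousOn (-R) R f f.continuous.continuousOn ε hε
    have a := abs_le.1 (key μ hμ hR1 ε p hp)
    have b := abs_le.1 (key ν hν hR2 ε p hp)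
    rw [h p] at a
    rw [abs_le]
    constructor <;> linarith [a.1, a.2, b.1, b.2]
  set M := μ.real Set.univ + ν.real Set.univ with hM
  have hM0 : 0 ≤ M := by positivity
  have : |∫ x, f x ∂μ - ∫ x, f x ∂ν| ≤ 0 := by
    apply le_of_forall_pos_le_add
    intro ε hε
    have := main (ε / (M + 1)) (by positivity)
    refine this.trans ?_
    rw [zero_add, div_mul_eq_mul_div, div_le_iff₀ (by positivity)]
    nlinarith
  exact sub_eq_zero.1 (abs_nonpos_iff.1 this)

end SemiStein

/-- A compactly supported probability measure `μ` on `ℝ` is the standard semicircle law iff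
for every `n ≥ 1` and every real polynomial `p`,
`∫ U_n(x)·p(x) dμ(x) = ∫∫ U_{n−1}(x)·Δ¹p(x,y) dμ(x)dμ(y)`. -/
theorem semicircle_iff_chebyshev_stein (μ : Measure ℝ) [IsProbabilityMeasure μ]
    (hμc : ∃ K : Set ℝ, IsCompact K ∧ μ Kᶜ = 0) :
    μ = semicircle 1 ↔
      ∀ n : ℕ, 1 ≤ n → ∀ p : Polynomial ℝ,
        ∫ x, chebU n x * p.eval x ∂μ =
          ∫ x, ∫ y, chebU (n - 1) x * divDiff 1 p ![x, y] ∂μ ∂μ := by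
  constructor
  · rintro rfl n hn p
    obtain ⟨k, rfl⟩ : ∃ k, n = k + 1 := ⟨n - 1, by omega⟩
    obtain ⟨q, h1, h2⟩ := SemiStein.good_all p
    simp only [Nat.add_sub_cancel, integral_const_mul, h1, h2]
  · intro h
    have hc : ∃ K : Set ℝ, IsCompact K ∧ semicircle 1 Kᶜ = 0 :=
      ⟨_, isCompact_Icc, SemiStein.semi_supp⟩
    refine SemiStein.ext_of_poly hμc hc fun p => ?_
    refine SemiStein.cheb_induction
      (fun p => ∫ x, p.eval x ∂μ = ∫ x, p.eval x ∂(semicircle 1)) ?_ ?_ ?_ p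
    · intro n
      simp only [SemiStein.chP_eval, SemiStein.semi_cheb]
      rcases Nat.eq_zero_or_pos n with rfl | hn
      · simp [chebU]
      · have := h n hn 1
        rw [if_neg hn.ne']
        simpa [SemiStein.dd_one] using this
    · intro p q hp hq
      simp only [Polynomial.eval_add]
      rw [integral_add (SemiStein.integrable_of_compact hμc p.continuous)
        (SemiStein.integrable_of_compact hμc q.continuous),
        integral_add (SemiStein.integrable_of_compact hc p.continuous)
        (SemiStein.integrable_of_compact hc q.continuous), hp, hq]
    · intro c p hp
      simp only [Polynomial.eval_mul, Polynomial.eval_C]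
      rw [integral_const_mul, integral_const_mul, hp]
end

section
/- Let S(0,1) denote the standard semicircle law. For every integer k ≥ 1 and every real polynomial p, ∫ U_k(x)·p(x) dS(0,1)(x) = ∫_{ℝ^{k+1}} Δᵏp(x₀,…,x_k) dS(0,1)^{⊗(k+1)}(x₀,…,x_k). Equivalently, the k-th order conjugate variable of a standard semicircular variable is the k-th Chebyshev polynomial U_k evaluated at it. -/
open MeasureTheory

lemma integral_semicircle (f : ℝ → ℝ) :
    ∫ x, f x ∂(semicircle 1) = (∫ x in (-2:ℝ)..2, Real.sqrt (4 - x ^ 2) * f x) / (2 * Real.pi) := by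
  unfold semicircle
  rw [integral_withDensity_eq_integral_toReal_smul (by fun_prop) (by simp)]
  rw [intervalIntegral.integral_of_le (by norm_num), ← integral_div]
  symm
  rw [setIntegral_eq_integral_of_forall_compl_eq_zero]
  · congr 1
    ext x
    rw [ENNReal.toReal_ofReal (by positivity)]
    simp only [smul_eq_mul, mul_one]
    ring
  · intro x hx
    have : 4 - x ^ 2 ≤ 0 := by
      simp only [Set.mem_Ioc, not_and_or, not_lt, not_le] at hx
      rcases hx with h | h <;> nlinarith
    rw [Real.sqrt_eq_zero_of_nonpos this]
    simp

lemma integrable_semicircle {f : ℝ → ℝ} (hf : Continuous f) : Integrable f (semicircle 1) := by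
  unfold semicircle
  rw [integrable_withDensity_iff_integrable_smul' (by fun_prop) (by simp)]
  have h : IntegrableOn (fun x => (ENNReal.ofReal (Real.sqrt (4 * 1 - x ^ 2) / (2 * Real.pi * 1))).toReal • f x)
      (Set.Icc (-2) 2) := by
    apply ContinuousOn.integrableOn_compact isCompact_Icc
    apply Continuous.continuousOn
    have : (fun x => (ENNReal.ofReal (Real.sqrt (4 * 1 - x ^ 2) / (2 * Real.pi * 1))).toReal • f x)
      = fun x => (Real.sqrt (4 * 1 - x ^ 2) / (2 * Real.pi * 1)) • f x := by
      ext x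
      rw [ENNReal.toReal_ofReal (by positivity)]
    rw [this]
    fun_prop
  refine (integrableOn_iff_integrable_of_support_subset ?_).1 h
  intro x hx
  by_contra hx'
  apply hx
  have : 4 * 1 - x ^ 2 ≤ 0 := by
    simp only [Set.mem_Icc, not_and_or, not_le] at hx'
    rcases hx' with h | h <;> nlinarith
  simp only [Real.sqrt_eq_zero_of_nonpos this, zero_div, ENNReal.ofReal_zero, ENNReal.toReal_zero, zero_smul]

noncomputable def scMom (n : ℕ) : ℝ := ∫ x, x ^ n ∂(semicircle 1)

instance : IsFiniteMeasure (semicircle 1) := by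
  have := integrable_semicircle (f := fun _ => (1:ℝ)) continuous_const
  exact ((integrable_const_iff_isFiniteMeasure one_ne_zero).1 this)

lemma scMom_zero : scMom 0 = 1 := by
  unfold scMom
  rw [integral_semicircle]
  have h := intervalIntegral.integral_comp_mul_left (a := -1) (b := 1)
    (fun x => Real.sqrt (4 - x ^ 2)) (c := 2) (by norm_num)
  have h2 : (fun x : ℝ => Real.sqrt (4 - (2 * x) ^ 2)) = fun x => 2 * Real.sqrt (1 - x ^ 2) := by
    ext x
    rw [show 4 - (2 * x) ^ 2 = 2 ^ 2 * (1 - x ^ 2) by ring, Real.sqrt_mul (by norm_num),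
      Real.sqrt_sq (by norm_num)]
  rw [h2, intervalIntegral.integral_const_mul, integral_sqrt_one_sub_sq] at h
  norm_num at h
  simp only [pow_zero, mul_one]
  have : ∫ x in (-2:ℝ)..2, Real.sqrt (4 - x ^ 2) = 2 * Real.pi := by linarith
  rw [this]
  exact div_self (by positivity)

lemma hasDerivAt_aux {g : ℝ → ℝ} {g' x : ℝ} (hg : HasDerivAt g g' x) (hx : x ∈ Set.Ioo (-2:ℝ) 2) :
    HasDerivAt (fun x => g x * ((4 - x ^ 2) * Real.sqrt (4 - x ^ 2)))
      (Real.sqrt (4 - x ^ 2) * (g' * (4 - x ^ 2) - 3 * x * g x)) x := by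
  have hpos : 0 < 4 - x ^ 2 := by nlinarith [hx.1, hx.2]
  have h1 : HasDerivAt (fun x : ℝ => 4 - x ^ 2) (- (2 * x)) x := by
    simpa using (hasDerivAt_pow 2 x).const_sub 4
  have h2 := hg.mul (h1.mul (h1.sqrt hpos.ne'))
  refine h2.congr_deriv ?_
  have hs : Real.sqrt (4 - x ^ 2) ≠ 0 := (Real.sqrt_pos.2 hpos).ne'
  have hq : Real.sqrt (4 - x ^ 2) ^ 2 = 4 - x ^ 2 := Real.sq_sqrt hpos.le
  simp only [Pi.mul_apply]
  field_simp
  rw [hq]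
  ring

lemma integral_aux {g g' : ℝ → ℝ} (hg : ∀ x, HasDerivAt g (g' x) x) (hg' : Continuous g') :
    ∫ x, (g' x * (4 - x ^ 2) - 3 * x * g x) ∂(semicircle 1) = 0 := by
  have hc : Continuous g := continuous_iff_continuousAt.2 fun x => (hg x).continuousAt
  rw [integral_semicircle, intervalIntegral.integral_eq_sub_of_hasDerivAt_of_le (by norm_num)
    (f := (fun x => g x * ((4 - x ^ 2) * Real.sqrt (4 - x ^ 2)))) (by fun_prop)
    (fun x hx => hasDerivAt_aux (hg x) hx)
    (Continuous.intervalIntegrable (by fun_prop) _ _)]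
  norm_num

lemma scMom_one : scMom 1 = 0 := by
  have := integral_aux (g := fun _ => 1) (g' := fun _ => 0) (fun x => hasDerivAt_const x _)
    continuous_const
  simp only [zero_mul, zero_sub, mul_one, integral_neg] at this
  rw [integral_const_mul] at this
  unfold scMom
  simp only [pow_one]
  linarith

lemma scMom_rec (n : ℕ) : (n + 4 : ℝ) * scMom (n + 2) = 4 * (n + 1) * scMom n := by
  have := integral_aux (g := fun x => x ^ (n + 1)) (g' := fun x => (n + 1 : ℝ) * x ^ n)
    (fun x => by simpa using hasDerivAt_pow (n + 1) x) (by fun_prop)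
  have h2 : (fun x : ℝ => (n + 1 : ℝ) * x ^ n * (4 - x ^ 2) - 3 * x * x ^ (n + 1)) =
    fun x => 4 * (n + 1 : ℝ) * x ^ n - (n + 4 : ℝ) * x ^ (n + 2) := by
    ext x; ring
  rw [h2, integral_sub (integrable_semicircle (by fun_prop)) (integrable_semicircle (by fun_prop)),
    integral_const_mul, integral_const_mul] at this
  unfold scMom
  linarith

lemma scMom_odd (n : ℕ) : scMom (2 * n + 1) = 0 := by
  induction n with
  | zero => exact scMom_one
  | succ n ih =>
    have := scMom_rec (2 * n + 1)
    rw [ih, mul_zero] at this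
    rcases mul_eq_zero.1 this with h | h
    · exfalso
      have : (0:ℝ) < ((2 * n + 1 : ℕ) : ℝ) + 4 := by positivity
      linarith
    · exact h

lemma scMom_even (n : ℕ) : scMom (2 * n) = catalan n := by
  induction n with
  | zero => simpa using scMom_zero
  | succ n ih =>
    have h := scMom_rec (2 * n)
    rw [ih] at h
    have h1 := succ_mul_catalan_eq_centralBinom n
    have h2 := succ_mul_catalan_eq_centralBinom (n + 1)
    have h3 := Nat.succ_mul_centralBinom_succ n
    rw [← h1, ← h2] at h3
    have h4 : ((n:ℝ) + 1) * (((n:ℝ) + 1 + 1) * catalan (n + 1)) =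
      2 * (2 * n + 1) * ((n + 1) * catalan n) := by exact_mod_cast h3
    have hn : (n:ℝ) + 1 ≠ 0 := by positivity
    have hn2 : (n:ℝ) + 2 ≠ 0 := by positivity
    have h5 : ((n:ℝ) + 1 + 1) * catalan (n + 1) = 2 * (2 * n + 1) * catalan n := by
      apply mul_left_cancel₀ hn
      linarith
    push_cast at h
    apply mul_left_cancel₀ hn2
    rw [show 2 * (n + 1) = 2 * n + 2 by ring]
    linarith

open PowerSeries in
noncomputable def scSeries : PowerSeries ℝ := PowerSeries.mk scMom

lemma scSeries_eq : scSeries = 1 + PowerSeries.X ^ 2 * scSeries ^ 2 := by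
  have h : scSeries = PowerSeries.expand 2 two_ne_zero
      (PowerSeries.map (Nat.castRingHom ℝ) PowerSeries.catalanSeries) := by
    ext n
    rw [PowerSeries.coeff_expand, scSeries, PowerSeries.coeff_mk]
    rcases Nat.even_or_odd' n with ⟨m, rfl | rfl⟩
    · simp [scMom_even]
    · rw [if_neg (by omega), scMom_odd]
  have h2 := congrArg (fun s => PowerSeries.expand 2 two_ne_zero
    (PowerSeries.map (Nat.castRingHom ℝ) s)) PowerSeries.catalanSeries_sq_mul_X_add_one
  simp only [map_add, map_mul, map_pow, map_one, PowerSeries.map_X, PowerSeries.expand_X,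
    ← h] at h2
  rw [add_comm, mul_comm]
  exact h2.symm

lemma continuous_chebU : ∀ k, Continuous (chebU k)
  | 0 => by
    have : chebU 0 = fun _ => 1 := by ext x; simp [chebU]
    rw [this]; fun_prop
  | 1 => by
    have : chebU 1 = fun x => x := by ext x; simp [chebU]
    rw [this]; fun_prop
  | (n + 2) => by
    have : chebU (n + 2) = fun x => x * chebU (n + 1) x - chebU n x := by ext x; simp [chebU]
    have h1 := continuous_chebU n
    have h2 := continuous_chebU (n + 1)
    rw [this]; fun_prop

lemma integral_chebU (k : ℕ) : ∀ m, ∫ x, chebU k x * x ^ m ∂(semicircle 1) =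
    PowerSeries.coeff m (PowerSeries.X ^ k * scSeries ^ (k + 1)) := by
  induction k using Nat.twoStepInduction with
  | zero =>
    intro m
    simp [chebU, scSeries, scMom]
  | one =>
    intro m
    have h := congrArg (PowerSeries.coeff (m + 1)) scSeries_eq
    rw [map_add, show PowerSeries.X ^ 2 * scSeries ^ 2 =
      PowerSeries.X * (PowerSeries.X ^ 1 * scSeries ^ (1 + 1)) by ring,
      PowerSeries.coeff_succ_X_mul] at h
    rw [PowerSeries.coeff_one, if_neg (by omega), zero_add] at h
    rw [← h, scSeries, PowerSeries.coeff_mk, scMom]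
    simp only [chebU, pow_succ']
  | more k h1 h2 =>
    intro m
    have c1 := continuous_chebU k
    have c2 := continuous_chebU (k + 1)
    have e : (fun x => chebU (k + 2) x * x ^ m) =
      fun x => chebU (k + 1) x * x ^ (m + 1) - chebU k x * x ^ m := by
      ext x; simp only [chebU]; ring
    rw [e, integral_sub (integrable_semicircle (by fun_prop)) (integrable_semicircle (by fun_prop)),
      h1, h2, ← PowerSeries.coeff_succ_X_mul m, ← PowerSeries.coeff_succ_X_mul m, ← map_sub]
    congr 1
    have := scSeries_eq
    linear_combination (PowerSeries.X ^ (k + 1) * scSeries ^ (k + 1)) * this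

lemma coeff_scSeries_pow (k n : ℕ) : PowerSeries.coeff n (scSeries ^ k) =
    ∑ a ∈ Finset.Nat.antidiagonalTuple k n, ∏ i, scMom (a i) := by
  have h := PowerSeries.coeff_prod (fun _ : Fin k => scSeries) n Finset.univ
  rw [Finset.prod_const, Finset.card_univ, Fintype.card_fin] at h
  rw [h]
  refine Finset.sum_nbij' (fun l => (l : Fin k → ℕ)) (fun a => Finsupp.equivFunOnFinite.symm a)
    ?_ ?_ ?_ ?_ ?_
  · intro l hl
    rw [Finset.mem_finsuppAntidiag] at hl
    rw [Finset.Nat.mem_antidiagonalTuple]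
    exact hl.1
  · intro a ha
    rw [Finset.Nat.mem_antidiagonalTuple] at ha
    rw [Finset.mem_finsuppAntidiag]
    exact ⟨ha, Finset.subset_univ _⟩
  · intro l _; ext; simp
  · intro a _; ext; simp
  · intro l _; simp [scSeries]

lemma integrable_monomial (k : ℕ) (a : Fin (k + 1) → ℕ) :
    Integrable (fun x : Fin (k + 1) → ℝ => ∏ i, x i ^ a i) (Measure.pi fun _ => semicircle 1) :=
  Integrable.fintype_prod (f := fun i x => x ^ a i)
    (fun i => integrable_semicircle (continuous_pow (a i)))

lemma integrable_divDiffMonomial (k m : ℕ) :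
    Integrable (divDiffMonomial k m) (Measure.pi fun _ => semicircle 1) := by
  unfold divDiffMonomial
  split_ifs
  · exact integrable_finsetSum _ fun a _ => integrable_monomial k a
  · exact integrable_zero _ _ _

lemma integral_divDiffMonomial (k m : ℕ) :
    ∫ x, divDiffMonomial k m x ∂(Measure.pi fun _ => semicircle 1) =
    PowerSeries.coeff m (PowerSeries.X ^ k * scSeries ^ (k + 1)) := by
  rw [PowerSeries.coeff_X_pow_mul']
  unfold divDiffMonomial
  split_ifs
  · rw [integral_finsetSum _ fun a _ => integrable_monomial k a, coeff_scSeries_pow]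
    refine Finset.sum_congr rfl fun a _ => ?_
    exact integral_fintype_prod_eq_prod (μ := fun _ : Fin (k + 1) => semicircle 1) (fun i x => x ^ a i)
  · simp

/-- The `k`-th order conjugate variable of a standard semicircular variable is `U_k`:
`∫ U_k(x)·p(x) dS(0,1)(x) = ∫_{ℝ^{k+1}} Δᵏp dS(0,1)^{⊗(k+1)}` for every real polynomial `p`. -/
theorem semicircle_higher_conjugate (k : ℕ) (hk : 1 ≤ k) (p : Polynomial ℝ) :
    ∫ x, chebU k x * p.eval x ∂(semicircle 1) =
      ∫ x : Fin (k + 1) → ℝ, divDiff k p x ∂(Measure.pi fun _ => semicircle 1) := by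
  have c := continuous_chebU k
  have e : (fun x => chebU k x * p.eval x) = fun x =>
      ∑ m ∈ Finset.range (p.natDegree + 1), p.coeff m * (chebU k x * x ^ m) := by
    ext x
    rw [Polynomial.eval_eq_sum_range, Finset.mul_sum]
    exact Finset.sum_congr rfl fun m _ => by ring
  rw [e]
  unfold divDiff
  rw [integral_finsetSum _ fun m _ => integrable_semicircle (by fun_prop),
    integral_finsetSum _ fun m _ => (integrable_divDiffMonomial k m).const_mul _]
  refine Finset.sum_congr rfl fun m _ => ?_
  rw [integral_const_mul, integral_const_mul, integral_chebU, integral_divDiffMonomial]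
end

section
/- For every σ > 0, the centered semicircular distribution S(0,σ²) of variance σ², i.e., the probability measure on ℝ with density x ↦ (1/(2πσ²))·√(4σ² − x²) on [−2σ, 2σ], has vanishing odd moments, and for every nonnegative integer m its even moments are given by ∫_{−2σ}^{2σ} x^{2m} dS(0,σ²)(x) = C_m·σ^{2m}, where C_m = (1/(m+1))·binom(2m, m) is the m-th Catalan number. -/
open MeasureTheory

lemma sc_J (m : ℕ) : ∫ x in (0:ℝ)..Real.pi, Real.cos x ^ (2 * m)
    = Real.pi * (Nat.centralBinom m : ℝ) / 4 ^ m := by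
  induction m with
  | zero => simp
  | succ k ih =>
    rw [show 2 * (k + 1) = 2 * k + 2 by ring, integral_cos_pow, ih]
    have h := Nat.succ_mul_centralBinom_succ k
    have h' : ((k : ℝ) + 1) * (Nat.centralBinom (k + 1) : ℝ)
        = 2 * (2 * k + 1) * Nat.centralBinom k := by exact_mod_cast h
    have hk : (k : ℝ) + 1 ≠ 0 := by positivity
    have h2 : (Nat.centralBinom (k + 1) : ℝ)
        = 2 * (2 * k + 1) * Nat.centralBinom k / (k + 1) := by
      rw [eq_div_iff hk, ← h']; ring
    rw [h2]
    simp only [Real.sin_pi, Real.sin_zero, mul_zero, sub_zero, zero_div, zero_add]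
    push_cast
    rw [pow_succ]
    field_simp
    ring

lemma sc_K (m : ℕ) : ∫ x in (0:ℝ)..Real.pi, Real.cos x ^ (2 * m) * Real.sin x ^ 2
    = Real.pi * (catalan m : ℝ) / (2 * 4 ^ m) := by
  have h1 : ∀ x : ℝ, Real.cos x ^ (2 * m) * Real.sin x ^ 2
      = Real.cos x ^ (2 * m) - Real.cos x ^ (2 * m + 2) := by
    intro x; rw [Real.sin_sq]; ring
  simp_rw [h1]
  rw [intervalIntegral.integral_sub (by apply Continuous.intervalIntegrable; fun_prop)
    (by apply Continuous.intervalIntegrable; fun_prop), integral_cos_pow, sc_J]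
  have h' : (Nat.centralBinom m : ℝ) = ((m : ℝ) + 1) * (catalan m : ℝ) := by
    exact_mod_cast (succ_mul_catalan_eq_centralBinom m).symm
  rw [h']
  simp only [Real.sin_pi, Real.sin_zero, mul_zero, sub_zero, zero_div, zero_add]
  push_cast
  field_simp
  ring

lemma sc_integral (v : ℝ) (hv : 0 < v) (f : ℝ → ℝ) :
    ∫ x, f x ∂(semicircle v) = ∫ x, Real.sqrt (4 * v - x ^ 2) / (2 * Real.pi * v) * f x := by
  unfold semicircle
  rw [integral_withDensity_eq_integral_toReal_smul (by fun_prop) (by simp)]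
  congr 1
  ext x
  rw [ENNReal.toReal_ofReal (by positivity), smul_eq_mul]

theorem semicircle_moments (σ : ℝ) (hσ : 0 < σ) :
    (∀ m : ℕ, ∫ x, x ^ (2 * m + 1) ∂(semicircle (σ ^ 2)) = 0) ∧
      (∀ m : ℕ, ∫ x, x ^ (2 * m) ∂(semicircle (σ ^ 2)) = (catalan m : ℝ) * σ ^ (2 * m)) := by
  refine ⟨fun m => ?_, fun m => ?_⟩
  · rw [sc_integral _ (by positivity)]
    have h := integral_neg_eq_self (fun x : ℝ =>
      Real.sqrt (4 * σ ^ 2 - x ^ 2) / (2 * Real.pi * σ ^ 2) * x ^ (2 * m + 1)) volume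
    have h2 : ∀ x : ℝ, Real.sqrt (4 * σ ^ 2 - (-x) ^ 2) / (2 * Real.pi * σ ^ 2) *
        (-x) ^ (2 * m + 1) =
        -(Real.sqrt (4 * σ ^ 2 - x ^ 2) / (2 * Real.pi * σ ^ 2) * x ^ (2 * m + 1)) := by
      intro x
      rw [Odd.neg_pow ⟨m, rfl⟩, neg_sq]; ring
    simp_rw [h2] at h
    rw [integral_neg] at h
    linarith
  · rw [sc_integral _ (by positivity)]
    set g : ℝ → ℝ := fun x =>
      Real.sqrt (4 * σ ^ 2 - x ^ 2) / (2 * Real.pi * σ ^ 2) * x ^ (2 * m) with hg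
    have hgc : Continuous g := by rw [hg]; fun_prop
    have hsupp : ∀ x, x ∉ Set.Ioc (-(2 * σ)) (2 * σ) → g x = 0 := by
      intro x hx
      have : 4 * σ ^ 2 - x ^ 2 ≤ 0 := by
        by_contra! hc
        apply hx
        have := abs_lt_of_sq_lt_sq' (show x ^ 2 < (2 * σ) ^ 2 by nlinarith) (by positivity)
        exact ⟨this.1, this.2.le⟩
      simp [hg, Real.sqrt_eq_zero_of_nonpos this]
    have e1 : ∫ x, g x = ∫ x in (-(2 * σ))..(2 * σ), g x := by
      rw [intervalIntegral.integral_of_le (by linarith),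
        setIntegral_eq_integral_of_forall_compl_eq_zero hsupp]
    have e2 := intervalIntegral.integral_comp_mul_deriv (a := 0) (b := Real.pi)
      (f := fun t => 2 * σ * Real.cos t) (f' := fun t => 2 * σ * (-Real.sin t)) (g := g)
      (fun t _ => (Real.hasDerivAt_cos t).const_mul _) (by fun_prop) hgc
    simp only [Real.cos_zero, Real.cos_pi, mul_one, mul_neg] at e2
    have e3 : ∫ t in (0:ℝ)..Real.pi,
        -((g ∘ fun t => 2 * σ * Real.cos t) t * (2 * σ * Real.sin t))
        = ∫ t in (0:ℝ)..Real.pi, (-(2 * (2 * σ) ^ (2 * m) / Real.pi)) *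
          (Real.cos t ^ (2 * m) * Real.sin t ^ 2) := by
      apply intervalIntegral.integral_congr
      intro t ht
      rw [Set.uIcc_of_le Real.pi_pos.le] at ht
      have hs := Real.sin_nonneg_of_mem_Icc ht
      have : 4 * σ ^ 2 - (2 * σ * Real.cos t) ^ 2 = (2 * σ * Real.sin t) ^ 2 := by
        rw [mul_pow, mul_pow _ (Real.sin t), Real.sin_sq]; ring
      simp only [hg, Function.comp]
      rw [this, Real.sqrt_sq (by positivity), mul_pow]
      have := Real.pi_pos
      field_simp
    rw [e3, intervalIntegral.integral_const_mul, sc_K] at e2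
    change ∫ x, g x = _
    rw [e1, intervalIntegral.integral_symm, ← e2, mul_pow, pow_mul 2 2 m]
    have := Real.pi_pos
    norm_num
    field_simp
end
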